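/- arXiv:math/0602181 — 2 statements merged into one kernel-verified Lean document; each statement's English description precedes it below -/
import Mathlib

section
/- Assume λ ∈ ℂ \ ℤ, χ_p ≠ 0, and, in case p = 0, additionally χ_0 ∈ ℂ \ ℤ. Then the vacuum vector is cyclic: the smallest ℂ-subspace of F containing 𝟙 and invariant under all the operators G⁺(i−1/2) and G⁻(i−1/2), i ∈ ℤ, is F itself. -/
noncomputable section

/-- The fermionic Fock space `F`: it has basis indexed by pairs `(A, B)` of finite sets of
nonnegative integers, the pair `(A, B)` corresponding to the basis monomial
`Ψ⁺(−n₁−1/2)⋯Ψ⁺(−n_r−1/2)·Ψ⁻(−k₁−1/2)⋯Ψ⁻(−k_s−1/2)·𝟙` where `A = {n₁ > ⋯ > n_r}` and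
`B = {k₁ > ⋯ > k_s}`. -/
abbrev FockF : Type := (Finset ℕ × Finset ℕ) →₀ ℂ

/-- The vacuum vector `𝟙`. -/
def vac : FockF := Finsupp.single (∅, ∅) 1

/-- `(−1)^{#{a ∈ S : a > m}}`. -/
def sgn (S : Finset ℕ) (m : ℕ) : ℂ := (-1 : ℂ) ^ (S.filter fun a => m < a).card

/-- `Ψ⁺(−m−1/2)`: exterior multiplication (creation). -/
def psiPneg (m : ℕ) : Module.End ℂ FockF :=
  Finsupp.lsum ℂ fun AB : Finset ℕ × Finset ℕ => LinearMap.toSpanSingleton ℂ FockF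
    (if m ∈ AB.1 then 0 else sgn AB.1 m • Finsupp.single (insert m AB.1, AB.2) 1)

/-- `Ψ⁺(m+1/2)`: the odd contraction operator pairing with `Ψ⁻(−m−1/2)` (annihilation). -/
def psiPpos (m : ℕ) : Module.End ℂ FockF :=
  Finsupp.lsum ℂ fun AB : Finset ℕ × Finset ℕ => LinearMap.toSpanSingleton ℂ FockF
    (if m ∈ AB.2 then ((-1 : ℂ) ^ AB.1.card * sgn AB.2 m) • Finsupp.single (AB.1, AB.2.erase m) 1
     else 0)

/-- `Ψ⁻(−m−1/2)`: exterior multiplication (creation). -/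
def psiMneg (m : ℕ) : Module.End ℂ FockF :=
  Finsupp.lsum ℂ fun AB : Finset ℕ × Finset ℕ => LinearMap.toSpanSingleton ℂ FockF
    (if m ∈ AB.2 then 0
     else ((-1 : ℂ) ^ AB.1.card * sgn AB.2 m) • Finsupp.single (AB.1, insert m AB.2) 1)

/-- `Ψ⁻(m+1/2)`: the odd contraction operator pairing with `Ψ⁺(−m−1/2)` (annihilation). -/
def psiMpos (m : ℕ) : Module.End ℂ FockF :=
  Finsupp.lsum ℂ fun AB : Finset ℕ × Finset ℕ => LinearMap.toSpanSingleton ℂ FockF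
    (if m ∈ AB.1 then sgn AB.1 m • Finsupp.single (AB.1.erase m, AB.2) 1 else 0)

/-- `PsiP i` is the operator `Ψ⁺(i − 1/2)`, `i ∈ ℤ`. -/
def PsiP (i : ℤ) : Module.End ℂ FockF :=
  if i ≤ 0 then psiPneg (-i).toNat else psiPpos (i - 1).toNat

/-- `PsiM i` is the operator `Ψ⁻(i − 1/2)`, `i ∈ ℤ`. -/
def PsiM (i : ℤ) : Module.End ℂ FockF :=
  if i ≤ 0 then psiMneg (-i).toNat else psiMpos (i - 1).toNat

/-- `G⁺(i−1/2) = (λ − i)·Ψ⁺(i−1/2)`. -/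
def Gplus (lam : ℂ) (i : ℤ) : Module.End ℂ FockF := (lam - (i : ℂ)) • PsiP i

/-- The finite set of indices `k ≥ −p` for which `Ψ⁻(k+i−1/2)` can act nontrivially on the
basis monomial `AB`; outside of it all terms of the locally finite sum defining `G⁻` vanish. -/
def GminusIdx (p : ℕ) (i : ℤ) (AB : Finset ℕ × Finset ℕ) : Finset ℤ :=
  (Finset.Icc (-(p : ℤ)) (-i) ∪ AB.1.image fun a : ℕ => (a : ℤ) + 1 - i).filter
    fun k => -(p : ℤ) ≤ k

/-- `G⁻(i−1/2) = −i·Ψ⁻(i−1/2) + Σ_{k=−p}^∞ χ_{−k}·Ψ⁻(k+i−1/2)` (a locally finite sum). -/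
def Gminus (p : ℕ) (χ : ℤ → ℂ) (i : ℤ) : Module.End ℂ FockF :=
  (-(i : ℂ)) • PsiM i +
    Finsupp.lsum ℂ fun AB : Finset ℕ × Finset ℕ => LinearMap.toSpanSingleton ℂ FockF
      (∑ k ∈ GminusIdx p i AB, χ (-k) • PsiM (k + i) (Finsupp.single AB 1))

end

/-! Act with the `G⁻` first and the `G⁺` afterwards. On a monomial without `Ψ⁺` factors every
annihilation operator `Ψ⁻` vanishes, so there `G⁻(p−m−1/2)` is a combination of the creation
operators `Ψ⁻(−l−1/2)`, `l ≤ m`. This system is triangular, with diagonal entries `χ_p` if `p > 0`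
and `χ_0 + m` if `p = 0`, and can be solved for the `Ψ⁻(−m−1/2)`. Since
`G⁺(−m−1/2) = (λ + m)·Ψ⁺(−m−1/2)`, the `G⁺` then supply the `Ψ⁺` factors. -/

theorem mem_of_triangular_sum_mem {K V : Type*} [DivisionRing K] [AddCommGroup V] [Module K V]
    {U : Submodule K V} {a : ℕ → ℕ → K} {w : ℕ → V} (ha : ∀ m, a m m ≠ 0)
    (hU : ∀ m, ∑ l ∈ Finset.range (m + 1), a m l • w l ∈ U) (m : ℕ) : w m ∈ U := by
  induction m using Nat.strong_induction_on with
  | _ m ih =>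
    have hlower : ∑ l ∈ Finset.range m, a m l • w l ∈ U :=
      U.sum_mem fun l hl => U.smul_mem _ (ih l (Finset.mem_range.1 hl))
    have hsum := hU m
    rw [Finset.sum_range_succ] at hsum
    exact (U.smul_mem_iff (ha m)).1 ((U.add_mem_iff_right hlower).1 hsum)

theorem sgn_ne_zero (S : Finset ℕ) (m : ℕ) : sgn S m ≠ 0 :=
  pow_ne_zero _ (neg_ne_zero.2 one_ne_zero)

theorem PsiP_neg_natCast (m : ℕ) : PsiP (-m) = psiPneg m := by
  simp [PsiP]

theorem PsiM_neg_natCast (m : ℕ) : PsiM (-m) = psiMneg m := by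
  simp [PsiM]

theorem psiPneg_single {A : Finset ℕ} {m : ℕ} (hm : m ∉ A) (B : Finset ℕ) :
    psiPneg m (Finsupp.single (A, B) 1) = sgn A m • Finsupp.single (insert m A, B) 1 := by
  simp [psiPneg, hm]

theorem psiMneg_single (A : Finset ℕ) {B : Finset ℕ} {m : ℕ} (hm : m ∉ B) :
    psiMneg m (Finsupp.single (A, B) 1) =
      ((-1) ^ A.card * sgn B m) • Finsupp.single (A, insert m B) 1 := by
  simp [psiMneg, hm]

theorem PsiM_single_empty_of_pos {i : ℤ} (hi : 0 < i) (B : Finset ℕ) :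
    PsiM i (Finsupp.single (∅, B) 1) = 0 := by
  simp [PsiM, psiMpos, hi.not_ge]

theorem Gminus_single_empty (p : ℕ) (χ : ℤ → ℂ) (i : ℤ) (B : Finset ℕ) :
    Gminus p χ i (Finsupp.single (∅, B) 1) =
      -(i : ℂ) • PsiM i (Finsupp.single (∅, B) 1) +
        ∑ k ∈ Finset.Icc (-(p : ℤ)) (-i), χ (-k) • PsiM (k + i) (Finsupp.single (∅, B) 1) := by
  have hidx : GminusIdx p i (∅, B) = Finset.Icc (-(p : ℤ)) (-i) := by
    ext k
    simp +contextual [GminusIdx]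
  simp [Gminus, hidx]

/-- The coefficient of `Ψ⁻(−l−1/2)` in `G⁻(p−m−1/2)`: besides the term of `χ`, the summand
`−i·Ψ⁻(i−1/2)` of `G⁻(i−1/2)` contributes `−i = l` when `i = p − m` equals `−l`. -/
def gminusCoeff (p : ℕ) (χ : ℤ → ℂ) (m l : ℕ) : ℂ :=
  (if l + p = m then (l : ℂ) else 0) + χ (p - m + l)

theorem gminusCoeff_self_ne_zero {p : ℕ} {χ : ℤ → ℂ} (hp : χ p ≠ 0)
    (h0 : p = 0 → ∀ n : ℕ, χ 0 ≠ -n) (m : ℕ) : gminusCoeff p χ m m ≠ 0 := by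
  rcases eq_or_ne p 0 with rfl | hp0
  · have hsum : (m : ℂ) + χ 0 ≠ 0 := fun h => h0 rfl m (eq_neg_of_add_eq_zero_right h)
    simpa [gminusCoeff] using hsum
  · simpa [gminusCoeff, hp0] using hp

theorem neg_smul_PsiM_single_empty (p m : ℕ) (B : Finset ℕ) :
    -((p - m : ℤ) : ℂ) • PsiM (p - m) (Finsupp.single (∅, B) 1) =
      ∑ l ∈ Finset.range (m + 1),
        (if l + p = m then (l : ℂ) else 0) • psiMneg l (Finsupp.single (∅, B) 1) := by
  rcases lt_or_ge m p with hmp | hpm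
  · rw [PsiM_single_empty_of_pos (by omega), smul_zero]
    refine (Finset.sum_eq_zero fun l _ => ?_).symm
    rw [if_neg (by omega), zero_smul]
  · obtain ⟨n, rfl⟩ := Nat.exists_eq_add_of_le' hpm
    have hindex : (p - (n + p : ℕ) : ℤ) = -(n : ℤ) := by omega
    rw [hindex, PsiM_neg_natCast, Finset.sum_eq_single_of_mem n (by simp)
      fun l _ hl => by simp [hl]]
    simp

theorem sum_chi_smul_PsiM (p m : ℕ) (χ : ℤ → ℂ) (v : FockF) :
    ∑ k ∈ Finset.Icc (-(p : ℤ)) (-(p - m)), χ (-k) • PsiM (k + (p - m)) v =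
      ∑ l ∈ Finset.range (m + 1), χ (p - m + l) • psiMneg l v := by
  symm
  refine Finset.sum_bij (fun l _ => (m - p - l : ℤ)) ?_ ?_ ?_ ?_
  · intro l hl
    simp only [Finset.mem_range, Finset.mem_Icc] at hl ⊢
    omega
  · intro l _ l' _ h
    omega
  · intro k hk
    simp only [Finset.mem_Icc] at hk
    exact ⟨(m - p - k).toNat, by rw [Finset.mem_range]; omega, by omega⟩
  · intro l _
    rw [← PsiM_neg_natCast]
    congr 2 <;> ring_nf

theorem Gminus_single_empty_eq_sum (p : ℕ) (χ : ℤ → ℂ) (m : ℕ) (B : Finset ℕ) :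
    Gminus p χ (p - m) (Finsupp.single (∅, B) 1) =
      ∑ l ∈ Finset.range (m + 1),
        gminusCoeff p χ m l • psiMneg l (Finsupp.single (∅, B) 1) := by
  simp only [gminusCoeff, add_smul, Finset.sum_add_distrib]
  rw [Gminus_single_empty, neg_smul_PsiM_single_empty, sum_chi_smul_PsiM]

theorem single_empty_mem_of_Gminus {p : ℕ} {χ : ℤ → ℂ} (hp : χ p ≠ 0)
    (h0 : p = 0 → ∀ n : ℕ, χ 0 ≠ -n) {U : Submodule ℂ FockF} (hvac : vac ∈ U)
    (hG : ∀ i ≤ (p : ℤ), ∀ v ∈ U, Gminus p χ i v ∈ U) (B : Finset ℕ) :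
    Finsupp.single (∅, B) 1 ∈ U := by
  induction B using Finset.induction_on with
  | empty => exact hvac
  | insert m B hm ih =>
    have hpsi : psiMneg m (Finsupp.single (∅, B) 1) ∈ U :=
      mem_of_triangular_sum_mem (gminusCoeff_self_ne_zero hp h0)
        (fun n => Gminus_single_empty_eq_sum p χ n B ▸ hG _ (by omega) _ ih) m
    rw [psiMneg_single ∅ hm] at hpsi
    exact (U.smul_mem_iff (by simp [sgn_ne_zero])).1 hpsi

theorem single_mem_of_Gplus {lam : ℂ} (hlam : ∀ n : ℕ, lam ≠ -n) {U : Submodule ℂ FockF}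
    (hG : ∀ i ≤ (0 : ℤ), ∀ v ∈ U, Gplus lam i v ∈ U) {B : Finset ℕ}
    (hB : Finsupp.single (∅, B) 1 ∈ U) (A : Finset ℕ) : Finsupp.single (A, B) 1 ∈ U := by
  induction A using Finset.induction_on with
  | empty => exact hB
  | insert m A hm ih =>
    have hpsi := hG (-m) (by omega) _ ih
    rw [Gplus, PsiP_neg_natCast, LinearMap.smul_apply, psiPneg_single hm] at hpsi
    have hcoeff : lam - ((-m : ℤ) : ℂ) ≠ 0 := sub_ne_zero.2 (by simpa using hlam m)
    exact (U.smul_mem_iff (sgn_ne_zero A m)).1 ((U.smul_mem_iff hcoeff).1 hpsi)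

theorem eq_top_of_single_mem {ι K : Type*} [Semiring K] {U : Submodule K (ι →₀ K)}
    (h : ∀ i, Finsupp.single i 1 ∈ U) : U = ⊤ := by
  rw [eq_top_iff, ← Finsupp.basisSingleOne.span_eq, Submodule.span_le]
  rintro _ ⟨i, rfl⟩
  simpa using h i

theorem statement1_general {p : ℕ} {χ : ℤ → ℂ} (hp : χ p ≠ 0)
    (h0 : p = 0 → ∀ n : ℕ, χ 0 ≠ -n) {lam : ℂ} (hlam : ∀ n : ℕ, lam ≠ -n)
    {U : Submodule ℂ FockF} (hvac : vac ∈ U)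
    (hGplus : ∀ i ≤ (0 : ℤ), ∀ v ∈ U, Gplus lam i v ∈ U)
    (hGminus : ∀ i ≤ (p : ℤ), ∀ v ∈ U, Gminus p χ i v ∈ U) : U = ⊤ :=
  eq_top_of_single_mem fun (A, B) =>
    single_mem_of_Gplus hlam hGplus (single_empty_mem_of_Gminus hp h0 hvac hGminus B) A

/-- Under the assumptions of Proposition `vazna-1` (`λ ∈ ℂ \ ℤ`, `χ_p ≠ 0`,
and `χ_0 ∈ ℂ \ ℤ` in case `p = 0`), the vacuum vector `𝟙` is cyclic for the action of the
operators `G⁺(i−1/2)`, `G⁻(i−1/2)`, `i ∈ ℤ`, on `F(λ/z, χ)`: the smallest invariant subspace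
of `F` containing `𝟙` is `F` itself (equivalently, every invariant subspace containing `𝟙`
is all of `F`). -/
theorem statement1 (p : ℕ) (χ : ℤ → ℂ) (hχtop : ∀ j : ℤ, (p : ℤ) < j → χ j = 0)
    (hp : χ p ≠ 0) (h0 : p = 0 → ∀ n : ℤ, χ 0 ≠ (n : ℂ))
    (lam : ℂ) (hlam : ∀ n : ℤ, lam ≠ (n : ℂ))
    (U : Submodule ℂ FockF) (hvac : vac ∈ U)
    (hU : ∀ i : ℤ, ∀ v ∈ U, Gplus lam i v ∈ U ∧ Gminus p χ i v ∈ U) :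
    U = ⊤ := by
  exact statement1_general hp (fun hp0 n => by exact_mod_cast h0 hp0 (-n))
    (fun n => by exact_mod_cast hlam (-n)) hvac (fun i _ v hv => (hU i v hv).1)
    fun i _ v hv => (hU i v hv).2
end

section
/- Assume λ ∈ ℂ \ ℤ, χ_p ≠ 0, and, in case p = 0, additionally χ_0 ∈ ℂ \ ℤ. Let v = Ψ⁺(−n_1−1/2)···Ψ⁺(−n_r−1/2)Ψ⁻(−k_1−1/2)···Ψ⁻(−k_s−1/2)𝟙 be a basis monomial of F (integers n_1>···>n_r≥0, k_1>···>k_s≥0). Then G⁻(n_r+p+1/2)···G⁻(n_1+p+1/2)·G⁺(k_s+1/2)···G⁺(k_1+1/2)·v = C′·𝟙, where C′ is a NONZERO scalar; moreover C′ equals, up to a sign, (λ−k_1−1)···(λ−k_s−1)·C″ with C″ = χ_p^r if p ≥ 1 and C″ = (χ_0−n_1−1)···(χ_0−n_r−1) if p = 0. -/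
/-!
In `v` the factors are stripped off from the left, so each operator meets a monomial whose largest
remaining index is the one it is meant to remove. For `G⁺(k+1/2)` this removes `Ψ⁻(−k−1/2)` and
costs a sign from passing the factors `Ψ⁺`. For `G⁻(n+p+1/2)` every mode `Ψ⁻(m+1/2)` in the sum
has `m ≥ n`, so only the lowest one, `m = n`, with coefficient `χ_p`, finds a partner
`Ψ⁺(−m−1/2)`; the term `−i·Ψ⁻(i−1/2)` has the mode `m = n + p` and contributes only for `p = 0`.
-/

theorem foldl_apply_smul {α R M : Type*} [Semiring R] [AddCommMonoid M] [Module R M]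
    (f : α → Module.End R M) (c : R) (x : M) (l : List α) :
    l.foldl (fun w a => f a w) (c • x) = c • l.foldl (fun w a => f a w) x :=
  List.foldl_hom (c • ·) fun w a => map_smul (f a) c w

theorem foldl_apply_eq_prod_smul {α R M : Type*} [CommSemiring R] [AddCommMonoid M] [Module R M]
    {r : α → α → Prop} {f : α → Module.End R M} {c : α → R} {u : List α → M}
    (hf : ∀ a l, (∀ b ∈ l, r a b) → f a (u (a :: l)) = c a • u l) {l : List α}
    (hl : l.Pairwise r) :
    l.foldl (fun w a => f a w) (u l) = (l.map c).prod • u [] := by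
  induction l with
  | nil => simp
  | cons a l ih =>
    obtain ⟨hal, hl⟩ := List.pairwise_cons.1 hl
    calc (a :: l).foldl (fun w b => f b w) (u (a :: l))
        = l.foldl (fun w b => f b w) (c a • u l) := by rw [List.foldl_cons, hf a l hal]
      _ = c a • l.foldl (fun w b => f b w) (u l) := foldl_apply_smul f (c a) (u l) l
      _ = ((a :: l).map c).prod • u [] := by
        rw [ih hl, smul_smul, List.map_cons, List.prod_cons]

theorem sgn_insert_self {S : Finset ℕ} {m : ℕ} (h : ∀ a ∈ S, a < m) : sgn (insert m S) m = 1 := by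
  have hempty : (insert m S).filter (fun a => m < a) = ∅ :=
    Finset.filter_eq_empty_iff.2 <|
      (Finset.forall_mem_insert ..).2 ⟨lt_irrefl m, fun a ha => (h a ha).not_gt⟩
  rw [sgn, hempty, Finset.card_empty, pow_zero]

theorem PsiP_natCast_add_one (m : ℕ) : PsiP ((m : ℤ) + 1) = psiPpos m := by
  rw [PsiP, if_neg (by omega), add_sub_cancel_right, Int.toNat_natCast]

theorem PsiM_natCast_add_one (m : ℕ) : PsiM ((m : ℤ) + 1) = psiMpos m := by
  rw [PsiM, if_neg (by omega), add_sub_cancel_right, Int.toNat_natCast]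

theorem psiPpos_single_insert (A : Finset ℕ) {B : Finset ℕ} {m : ℕ} (h : ∀ b ∈ B, b < m) :
    psiPpos m (Finsupp.single (A, insert m B) 1) =
      (-1 : ℂ) ^ A.card • Finsupp.single (A, B) 1 := by
  have hm : m ∉ B := fun hm => lt_irrefl m (h m hm)
  rw [psiPpos, Finsupp.lsum_single, LinearMap.toSpanSingleton_apply, one_smul,
    if_pos (Finset.mem_insert_self m B), sgn_insert_self h, Finset.erase_insert hm, mul_one]

theorem psiMpos_single_insert {A : Finset ℕ} (B : Finset ℕ) {m : ℕ} (h : ∀ a ∈ A, a < m) :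
    psiMpos m (Finsupp.single (insert m A, B) 1) = Finsupp.single (A, B) 1 := by
  have hm : m ∉ A := fun hm => lt_irrefl m (h m hm)
  rw [psiMpos, Finsupp.lsum_single, LinearMap.toSpanSingleton_apply, one_smul,
    if_pos (Finset.mem_insert_self m A), sgn_insert_self h, Finset.erase_insert hm, one_smul]

theorem psiMpos_single_of_notMem {A : Finset ℕ} (B : Finset ℕ) {m : ℕ} (hm : m ∉ A) :
    psiMpos m (Finsupp.single (A, B) 1) = 0 := by
  rw [psiMpos, Finsupp.lsum_single, LinearMap.toSpanSingleton_apply, one_smul, if_neg hm]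

theorem PsiM_single_eq_zero {A : Finset ℕ} (B : Finset ℕ) {i : ℤ} (hi : 0 < i)
    (h : ∀ a ∈ A, (a : ℤ) + 1 ≠ i) : PsiM i (Finsupp.single (A, B) 1) = 0 := by
  obtain ⟨m, rfl⟩ : ∃ m : ℕ, i = m + 1 := ⟨(i - 1).toNat, by omega⟩
  rw [PsiM_natCast_add_one]
  exact psiMpos_single_of_notMem B fun hm => h m hm rfl

theorem Gplus_single_insert (lam : ℂ) (A : Finset ℕ) {B : Finset ℕ} {k : ℕ}
    (h : ∀ b ∈ B, b < k) :
    Gplus lam ((k : ℤ) + 1) (Finsupp.single (A, insert k B) 1) =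
      ((-1 : ℂ) ^ A.card * (lam - k - 1)) • Finsupp.single (A, B) 1 := by
  rw [Gplus, LinearMap.smul_apply, PsiP_natCast_add_one, psiPpos_single_insert A h, smul_smul]
  congr 1
  push_cast
  ring

theorem foldl_Gplus_single (lam : ℂ) (A : Finset ℕ) {ks : List ℕ} (hks : ks.Pairwise (· > ·)) :
    ks.foldl (fun w (k : ℕ) => Gplus lam ((k : ℤ) + 1) w)
        (Finsupp.single (A, ks.toFinset) 1) =
      ((-1) ^ (A.card * ks.length) * (ks.map fun k : ℕ => lam - (k : ℂ) - 1).prod) •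
        Finsupp.single (A, ∅) 1 := by
  have hstep (k : ℕ) (l : List ℕ) (hl : ∀ b ∈ l, k > b) :
      Gplus lam ((k : ℤ) + 1) (Finsupp.single (A, (k :: l).toFinset) 1) =
        ((-1 : ℂ) ^ A.card * (lam - k - 1)) • Finsupp.single (A, l.toFinset) 1 := by
    rw [List.toFinset_cons]
    exact Gplus_single_insert lam A fun b hb => hl b (List.mem_toFinset.1 hb)
  rw [foldl_apply_eq_prod_smul (u := fun l => Finsupp.single (A, l.toFinset) 1) hstep hks,
    List.prod_map_mul, List.map_const', List.prod_replicate, ← pow_mul, List.toFinset_nil]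

theorem Gminus_single (p : ℕ) (χ : ℤ → ℂ) (i : ℤ) (AB : Finset ℕ × Finset ℕ) :
    Gminus p χ i (Finsupp.single AB 1) =
      (-(i : ℂ)) • PsiM i (Finsupp.single AB 1) +
        ∑ k ∈ GminusIdx p i AB, χ (-k) • PsiM (k + i) (Finsupp.single AB 1) := by
  rw [Gminus, LinearMap.add_apply, LinearMap.smul_apply, Finsupp.lsum_single,
    LinearMap.toSpanSingleton_apply, one_smul]

section LargestIndex

variable {A : Finset ℕ} (B : Finset ℕ) {n : ℕ} (h : ∀ a ∈ A, a < n)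

include h

theorem PsiM_single_insert_self :
    PsiM ((n : ℤ) + 1) (Finsupp.single (insert n A, B) 1) = Finsupp.single (A, B) 1 := by
  rw [PsiM_natCast_add_one, psiMpos_single_insert B h]

theorem PsiM_single_insert_of_lt {i : ℤ} (hi : (n : ℤ) + 1 < i) :
    PsiM i (Finsupp.single (insert n A, B) 1) = 0 := by
  refine PsiM_single_eq_zero B (by omega) ((Finset.forall_mem_insert ..).2 ⟨hi.ne, fun a ha => ?_⟩)
  have han : a < n := h a ha
  omega

theorem sum_GminusIdx_single_insert (p : ℕ) (χ : ℤ → ℂ) :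
    ∑ k ∈ GminusIdx p ((n : ℤ) + p + 1) (insert n A, B),
        χ (-k) • PsiM (k + ((n : ℤ) + p + 1)) (Finsupp.single (insert n A, B) 1) =
      χ p • Finsupp.single (A, B) 1 := by
  have hlowest : -(p : ℤ) + ((n : ℤ) + p + 1) = n + 1 := by ring
  rw [Finset.sum_eq_single (-(p : ℤ)), hlowest, PsiM_single_insert_self B h, neg_neg]
  · intro k hk hne
    have hk' : -(p : ℤ) ≤ k := (Finset.mem_filter.1 hk).2
    rw [PsiM_single_insert_of_lt B h (by omega), smul_zero]
  · refine fun hp => absurd (Finset.mem_filter.2 ⟨Finset.mem_union_right _ ?_, le_rfl⟩) hp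
    exact Finset.mem_image.2 ⟨n, Finset.mem_insert_self n A, by ring⟩

theorem Gminus_single_insert (p : ℕ) (χ : ℤ → ℂ) :
    Gminus p χ ((n : ℤ) + p + 1) (Finsupp.single (insert n A, B) 1) =
      (if p = 0 then χ 0 - n - 1 else χ p) • Finsupp.single (A, B) 1 := by
  rw [Gminus_single, sum_GminusIdx_single_insert B h]
  split_ifs with hp
  · subst hp
    rw [Nat.cast_zero, add_zero, PsiM_single_insert_self B h, ← add_smul]
    congr 1
    push_cast
    ring
  · rw [PsiM_single_insert_of_lt B h (by omega), smul_zero, zero_add]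

end LargestIndex

theorem foldl_Gminus_single (p : ℕ) (χ : ℤ → ℂ) (B : Finset ℕ) {ns : List ℕ}
    (hns : ns.Pairwise (· > ·)) :
    ns.foldl (fun w (n : ℕ) => Gminus p χ ((n : ℤ) + (p : ℤ) + 1) w)
        (Finsupp.single (ns.toFinset, B) 1) =
      (if p = 0 then (ns.map fun n : ℕ => χ 0 - (n : ℂ) - 1).prod else χ p ^ ns.length) •
        Finsupp.single (∅, B) 1 := by
  have hstep (n : ℕ) (l : List ℕ) (hl : ∀ a ∈ l, n > a) :
      Gminus p χ ((n : ℤ) + p + 1) (Finsupp.single ((n :: l).toFinset, B) 1) =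
        (if p = 0 then χ 0 - n - 1 else χ p) • Finsupp.single (l.toFinset, B) 1 := by
    rw [List.toFinset_cons]
    exact Gminus_single_insert B (fun a ha => hl a (List.mem_toFinset.1 ha)) p χ
  rw [foldl_apply_eq_prod_smul (u := fun l => Finsupp.single (l.toFinset, B) 1) hstep hns,
    List.toFinset_nil]
  split_ifs
  · rfl
  · rw [List.map_const', List.prod_replicate]

theorem foldl_Gminus_foldl_Gplus_single (p : ℕ) (χ : ℤ → ℂ) (lam : ℂ) {ns ks : List ℕ}
    (hns : ns.Pairwise (· > ·)) (hks : ks.Pairwise (· > ·)) :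
    ns.foldl (fun w (n : ℕ) => Gminus p χ ((n : ℤ) + (p : ℤ) + 1) w)
        (ks.foldl (fun w (k : ℕ) => Gplus lam ((k : ℤ) + 1) w)
          (Finsupp.single (ns.toFinset, ks.toFinset) 1)) =
      ((-1) ^ (ns.length * ks.length) * ((ks.map fun k : ℕ => lam - (k : ℂ) - 1).prod *
        (if p = 0 then (ns.map fun n : ℕ => χ 0 - (n : ℂ) - 1).prod else χ p ^ ns.length))) •
        vac := by
  have hcard : ns.toFinset.card = ns.length := List.toFinset_card_of_nodup hns.nodup
  rw [foldl_Gplus_single lam _ hks, hcard,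
    foldl_apply_smul fun n : ℕ => Gminus p χ ((n : ℤ) + p + 1), foldl_Gminus_single p χ ∅ hns,
    smul_smul, mul_assoc, vac]

theorem prod_map_sub_natCast_sub_one_ne_zero {R : Type*} [CommRing R] [IsDomain R] {x : R}
    {l : List ℕ} (h : ∀ n ∈ l, x ≠ n + 1) : (l.map fun n : ℕ => x - (n : R) - 1).prod ≠ 0 := by
  refine List.prod_ne_zero fun hzero => ?_
  obtain ⟨n, hn, hzero⟩ := List.mem_map.1 hzero
  exact h n hn (by linear_combination hzero)

theorem statement3_general (p : ℕ) (χ : ℤ → ℂ) (hp : p ≠ 0 → χ p ≠ 0) (lam : ℂ)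
    (ns ks : List ℕ) (h0 : p = 0 → ∀ n ∈ ns, χ 0 ≠ n + 1) (hlam : ∀ k ∈ ks, lam ≠ k + 1)
    (hns : ns.Pairwise (· > ·)) (hks : ks.Pairwise (· > ·)) :
    ∃ C' : ℂ, C' ≠ 0 ∧
      (C' = (ks.map fun k : ℕ => lam - (k : ℂ) - 1).prod *
          (if p = 0 then (ns.map fun n : ℕ => χ 0 - (n : ℂ) - 1).prod else χ p ^ ns.length) ∨
        C' = -((ks.map fun k : ℕ => lam - (k : ℂ) - 1).prod *
          (if p = 0 then (ns.map fun n : ℕ => χ 0 - (n : ℂ) - 1).prod else χ p ^ ns.length))) ∧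
      ns.foldl (fun w (n : ℕ) => Gminus p χ ((n : ℤ) + (p : ℤ) + 1) w)
          (ks.foldl (fun w (k : ℕ) => Gplus lam ((k : ℤ) + 1) w)
            (Finsupp.single (ns.toFinset, ks.toFinset) 1)) = C' • vac := by
  have hns_factor :
      (if p = 0 then (ns.map fun n : ℕ => χ 0 - (n : ℂ) - 1).prod else χ p ^ ns.length) ≠ 0 := by
    split_ifs with hp0
    · exact prod_map_sub_natCast_sub_one_ne_zero (h0 hp0)
    · exact pow_ne_zero _ (hp hp0)
  have hsign : (-1 : ℂ) ^ (ns.length * ks.length) ≠ 0 := pow_ne_zero _ (neg_ne_zero.2 one_ne_zero)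
  refine ⟨_, mul_ne_zero hsign (mul_ne_zero (prod_map_sub_natCast_sub_one_ne_zero hlam) hns_factor),
    ?_, foldl_Gminus_foldl_Gplus_single p χ lam hns hks⟩
  exact (neg_one_pow_eq_or ℂ (ns.length * ks.length)).imp
    (fun h => by rw [h, one_mul]) (fun h => by rw [h, neg_one_mul])

/-- Assume `λ ∈ ℂ \ ℤ`, `χ_p ≠ 0` and (if `p = 0`) `χ_0 ∈ ℂ \ ℤ`.  Let
`v = Ψ⁺(−n₁−1/2)⋯Ψ⁺(−n_r−1/2)Ψ⁻(−k₁−1/2)⋯Ψ⁻(−k_s−1/2)𝟙` be a basis monomial of `F`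
(with `n₁ > ⋯ > n_r ≥ 0`, `k₁ > ⋯ > k_s ≥ 0`, encoded as strictly decreasing lists `ns`, `ks`).
Then `G⁻(n_r+p+1/2)⋯G⁻(n₁+p+1/2)·G⁺(k_s+1/2)⋯G⁺(k₁+1/2)·v = C′·𝟙` for a NONZERO scalar
`C′`, which moreover equals, up to a sign, `(λ−k₁−1)⋯(λ−k_s−1)·C″` with `C″ = χ_p^r` if
`p ≥ 1` and `C″ = (χ_0−n₁−1)⋯(χ_0−n_r−1)` if `p = 0`. -/
theorem statement3 (p : ℕ) (χ : ℤ → ℂ) (hχtop : ∀ j : ℤ, (p : ℤ) < j → χ j = 0)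
    (hp : χ p ≠ 0) (h0 : p = 0 → ∀ n : ℤ, χ 0 ≠ (n : ℂ))
    (lam : ℂ) (hlam : ∀ n : ℤ, lam ≠ (n : ℂ))
    (ns ks : List ℕ) (hns : ns.Chain' (· > ·)) (hks : ks.Chain' (· > ·)) :
    ∃ C' : ℂ, C' ≠ 0 ∧
      (C' = (ks.map fun k => lam - (k : ℂ) - 1).prod *
              (if p = 0 then (ns.map fun n => χ 0 - (n : ℂ) - 1).prod else χ p ^ ns.length) ∨
       C' = -((ks.map fun k => lam - (k : ℂ) - 1).prod *
              (if p = 0 then (ns.map fun n => χ 0 - (n : ℂ) - 1).prod else χ p ^ ns.length))) ∧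
      ns.foldl (fun w n => Gminus p χ ((n : ℤ) + (p : ℤ) + 1) w)
          (ks.foldl (fun w k => Gplus lam ((k : ℤ) + 1) w)
            (Finsupp.single (ns.toFinset, ks.toFinset) 1)) = C' • vac := by
  -- The products and folds of the statement run over `ns` and `ks` coerced to lists in `ℂ` and `ℤ`.
  simp only [bind_pure_comp, List.map_eq_map, List.map_map, List.foldl_map, Function.comp_def]
  exact statement3_general p χ (fun _ => hp) lam ns ks
    (fun h n _ => by exact_mod_cast h0 h (n + 1)) (fun k _ => by exact_mod_cast hlam (k + 1))
    hns.pairwise hks.pairwise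
end
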